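/- arXiv:1407.7799 — 3 statements merged into one kernel-verified Lean document; each statement's English description precedes it below -/
import Mathlib

section
/- Let k and j be integers with 2 ≤ j ≤ k, and let n be a positive integer with n ≥ k·ln(2k). Define s_j = j^n / (j!·(k−j)!), regarded as a real number. Then s_j ≥ 2·s_{j−1}. -/
/-!
The ratio of consecutive terms is `s_j / s_{j-1} = (k - j + 1) / j * (j / (j - 1)) ^ n`. Since
`1 - 1 / j ≤ exp (-1 / j)`, the last factor is at least `exp (n / j)`, so the ratio is at least `c`
as soon as `n ≥ j * log (c * j / (k - j + 1))`. When `1 ≤ j ≤ k` and `c * k ≥ 1`, this threshold is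
at most `k * log (c * k)`, its value at `j = k`.
-/

open Real
open scoped Nat

/-- The real number `s_j = j ^ n / (j! (k - j)!)`: up to the sign `(-1) ^ (k - j)`, the `j`-th term
of the inclusion-exclusion formula for the Stirling number of the second kind `S(n, k)`. The factor
`(k - j)!` uses truncated subtraction, so only the values with `j ≤ k` are meaningful. -/
noncomputable def stirlingTerm (n k j : ℕ) : ℝ :=
  (j : ℝ) ^ n / (j ! * (k - j)!)

theorem mul_stirlingTerm_pred_le_iff {n k j : ℕ} {c : ℝ} (hj : 0 < j) (hjk : j ≤ k) :
    c * stirlingTerm n k (j - 1) ≤ stirlingTerm n k j ↔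
      c * j * ((j : ℝ) - 1) ^ n ≤ (k - j + 1) * (j : ℝ) ^ n := by
  obtain ⟨m, rfl⟩ := Nat.exists_eq_add_of_le' hj
  obtain ⟨d, rfl⟩ := Nat.exists_eq_add_of_le hjk
  have hpred : stirlingTerm n (m + 1 + d) m =
      (m + 1) * (m : ℝ) ^ n / ((m + 1)! * (d + 1)!) := by
    rw [stirlingTerm, show m + 1 + d - m = d + 1 by lia, Nat.factorial_succ m]
    push_cast
    field_simp
  have hself : stirlingTerm n (m + 1 + d) (m + 1) =
      (d + 1) * ((m : ℝ) + 1) ^ n / ((m + 1)! * (d + 1)!) := by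
    rw [stirlingTerm, Nat.add_sub_cancel_left, Nat.factorial_succ d]
    push_cast
    field_simp
  rw [Nat.add_sub_cancel, hpred, hself, ← mul_div_assoc,
    div_le_div_iff_of_pos_right (by positivity)]
  push_cast
  ring_nf

theorem mul_sub_one_pow_le_pow {x c : ℝ} {n : ℕ} (hx : 1 ≤ x) (h : x * log c ≤ n) :
    c * (x - 1) ^ n ≤ x ^ n := by
  have hx₀ : 0 < x := by positivity
  have hc : c ≤ exp (n / x) :=
    (le_exp_log c).trans <| exp_le_exp.2 <| (le_div_iff₀' hx₀).2 h
  have hbase : x - 1 ≤ x * exp (-(1 / x)) :=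
    calc
      x - 1 = x * (1 - 1 / x) := by field_simp
      _ ≤ x * exp (-(1 / x)) := by gcongr; exact one_sub_le_exp_neg _
  calc
    c * (x - 1) ^ n ≤ exp (n / x) * (x * exp (-(1 / x))) ^ n := by
      have : 0 ≤ x - 1 := sub_nonneg.2 hx
      gcongr
    _ = x ^ n * (exp (n / x) * exp (-(n / x))) := by
      rw [mul_pow, ← exp_nat_mul, mul_neg, mul_one_div]
      ring
    _ = x ^ n := by rw [← exp_add, add_neg_cancel, exp_zero, mul_one]

theorem mul_log_div_le_mul_log {x y c : ℝ} (hc : 0 < c) (hx : 0 < x) (hxy : x ≤ y)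
    (hcy : 1 ≤ c * y) : x * log (c * x / (y - x + 1)) ≤ y * log (c * y) := by
  have hden : 1 ≤ y - x + 1 := by linarith
  have harg : c * x / (y - x + 1) ≤ c * y :=
    (div_le_self (by positivity) hden).trans (by gcongr)
  calc
    x * log (c * x / (y - x + 1)) ≤ x * log (c * y) := by gcongr
    _ ≤ y * log (c * y) := mul_le_mul_of_nonneg_right hxy (log_nonneg hcy)

theorem stmt1_general {n k j : ℕ} {c : ℝ} (hj : 0 < j) (hjk : j ≤ k)
    (hn : j * log (c * j / (k - j + 1)) ≤ n) :
    c * stirlingTerm n k (j - 1) ≤ stirlingTerm n k j := by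
  have hden : (0 : ℝ) < k - j + 1 := by
    have : (j : ℝ) ≤ k := mod_cast hjk
    linarith
  have hpow : c * j / (k - j + 1) * ((j : ℝ) - 1) ^ n ≤ (j : ℝ) ^ n :=
    mul_sub_one_pow_le_pow (mod_cast hj) hn
  rwa [mul_stirlingTerm_pred_le_iff hj hjk, ← div_le_iff₀' hden, ← div_mul_eq_mul_div]

/-- For integers `2 ≤ j ≤ k` and a positive integer `n ≥ k·ln(2k)`, the quantity
`s_j = j^n / (j!·(k−j)!)` satisfies `s_j ≥ 2·s_{j−1}`. -/
theorem stmt1 (k j n : ℕ) (hj : 2 ≤ j) (hjk : j ≤ k) (hn : 0 < n)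
    (hnk : (n : ℝ) ≥ (k : ℝ) * Real.log (2 * (k : ℝ))) :
    (j : ℝ) ^ n / ((Nat.factorial j : ℝ) * (Nat.factorial (k - j) : ℝ)) ≥
      2 * (((j - 1 : ℕ) : ℝ) ^ n /
        ((Nat.factorial (j - 1) : ℝ) * (Nat.factorial (k - (j - 1)) : ℝ))) := by
  have hj₀ : 0 < j := by lia
  exact stmt1_general hj₀ hjk <| (mul_log_div_le_mul_log two_pos (mod_cast hj₀) (mod_cast hjk)
    (mod_cast (by lia : 1 ≤ 2 * k))).trans hnk
end

section
/- Let n and k be positive integers with n ≥ k·ln(2k). Then (1/2)·k^n/k! ≤ S(n,k) ≤ k^n/k!. -/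
/-- Stirling numbers of the second kind: `stirling2 n k` is the number of
partitions of an `n`-element set into `k` nonempty blocks. -/
def stirling2 : ℕ → ℕ → ℕ
  | 0, 0 => 1
  | 0, _ + 1 => 0
  | _ + 1, 0 => 0
  | n + 1, k + 1 => (k + 1) * stirling2 n (k + 1) + stirling2 n k

/-!
Sorting the `m ^ n` maps from an `n`-set to an `m`-set by the size of their image gives
`m ^ n = ∑ j ≤ m, S(n, j) * m.descFactorial j`; algebraically, this is an induction on `n` driven by
`j * m.descFactorial j + m.descFactorial (j + 1) = m * m.descFactorial j`. For `m = k` the term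
`j = k` is `S(n, k) * k!`, whence the upper bound. The remaining terms count the maps that miss a
point and are at most `k * (k - 1) ^ n`, by comparison with the same identity for `m = k - 1`.
Finally `k * (k - 1) ^ n ≤ k * exp (-n / k) * k ^ n`, and `k * exp (-n / k) ≤ 1 / 2` is a
rearrangement of `n ≥ k * log (2 * k)`.
-/

open Finset
open scoped Nat

theorem sum_range_stirling2_succ_nsmul {M : Type*} [AddCommMonoid M] (n m : ℕ) (f : ℕ → M)
    (hf : f (m + 1) = 0) :
    ∑ j ∈ range (m + 1), stirling2 (n + 1) j • f j =
      ∑ j ∈ range (m + 1), stirling2 n j • (j • f j + f (j + 1)) := by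
  have keep_block : ∑ j ∈ range (m + 1), stirling2 n j • j • f j =
      ∑ j ∈ range m, ((j + 1) * stirling2 n (j + 1)) • f (j + 1) := by
    simp only [sum_range_succ', zero_nsmul, nsmul_zero, add_zero, mul_nsmul]
  have new_block : ∑ j ∈ range (m + 1), stirling2 n j • f (j + 1) =
      ∑ j ∈ range m, stirling2 n j • f (j + 1) := by
    rw [sum_range_succ, hf, nsmul_zero, add_zero]
  simp only [nsmul_add, sum_add_distrib, keep_block, new_block]
  simp only [sum_range_succ', stirling2, add_nsmul, sum_add_distrib, zero_nsmul, add_zero]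

theorem mul_descFactorial_add_descFactorial_succ {m j : ℕ} (hj : j ≤ m) :
    j * m.descFactorial j + m.descFactorial (j + 1) = m * m.descFactorial j := by
  rw [Nat.descFactorial_succ, ← add_mul, Nat.add_sub_cancel' hj]

theorem sum_stirling2_mul_descFactorial (n m : ℕ) :
    ∑ j ∈ range (m + 1), stirling2 n j * m.descFactorial j = m ^ n := by
  induction n with
  | zero => simp [sum_range_succ', stirling2]
  | succ n ih =>
    calc ∑ j ∈ range (m + 1), stirling2 (n + 1) j * m.descFactorial j
        = ∑ j ∈ range (m + 1),
            stirling2 n j * (j * m.descFactorial j + m.descFactorial (j + 1)) :=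
          sum_range_stirling2_succ_nsmul n m m.descFactorial
            (Nat.descFactorial_of_lt m.lt_succ_self)
      _ = ∑ j ∈ range (m + 1), m * (stirling2 n j * m.descFactorial j) :=
          sum_congr rfl fun j hj => by
            rw [mul_descFactorial_add_descFactorial_succ (mem_range_succ_iff.mp hj),
              mul_left_comm]
      _ = m ^ (n + 1) := by rw [← mul_sum, ih, pow_succ']

theorem stirling2_mul_factorial_le_pow (n k : ℕ) : stirling2 n k * k ! ≤ k ^ n := by
  rw [← sum_stirling2_mul_descFactorial n k, sum_range_succ, Nat.descFactorial_self]
  exact Nat.le_add_left _ _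

theorem succ_descFactorial_le_succ_mul_descFactorial {k j : ℕ} (hj : j ≤ k) :
    (k + 1).descFactorial j ≤ (k + 1) * k.descFactorial j := by
  rw [← Nat.succ_descFactorial]
  exact Nat.le_mul_of_pos_left _ (by lia)

theorem succ_pow_le_stirling2_mul_factorial_add (n k : ℕ) :
    (k + 1) ^ n ≤ stirling2 n (k + 1) * (k + 1)! + (k + 1) * k ^ n := by
  have non_surjective : ∑ j ∈ range (k + 1), stirling2 n j * (k + 1).descFactorial j ≤
      (k + 1) * k ^ n := by
    rw [← sum_stirling2_mul_descFactorial n k, mul_sum]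
    refine sum_le_sum fun j hj => ?_
    rw [mul_left_comm]
    exact Nat.mul_le_mul_left _
      (succ_descFactorial_le_succ_mul_descFactorial (mem_range_succ_iff.mp hj))
  rw [← sum_stirling2_mul_descFactorial n (k + 1), sum_range_succ, Nat.descFactorial_self,
    add_comm]
  exact Nat.add_le_add_left non_surjective _

theorem pow_le_pow_mul_exp_neg {x y : ℝ} (hx : 0 < x) (hy : 0 ≤ y) (n : ℕ) :
    y ^ n ≤ x ^ n * Real.exp (-(n * ((x - y) / x))) := by
  have base : y ≤ x * Real.exp (-((x - y) / x)) := by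
    calc y = x * (1 - (x - y) / x) := by field_simp; ring
      _ ≤ x * Real.exp (-((x - y) / x)) := by gcongr; exact Real.one_sub_le_exp_neg _
  calc y ^ n ≤ (x * Real.exp (-((x - y) / x))) ^ n := by gcongr
    _ = x ^ n * Real.exp (-(n * ((x - y) / x))) := by
      rw [mul_pow, ← Real.exp_nat_mul, mul_neg]

theorem mul_exp_neg_div_le_inv {c x t : ℝ} (hc : 0 < c) (hx : 0 < x)
    (h : x * Real.log (c * x) ≤ t) : x * Real.exp (-(t / x)) ≤ c⁻¹ := by
  calc x * Real.exp (-(t / x)) ≤ x * Real.exp (-Real.log (c * x)) := by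
        gcongr
        rwa [le_div_iff₀' hx]
    _ = c⁻¹ := by
      rw [Real.exp_neg, Real.exp_log (mul_pos hc hx)]
      field_simp

theorem one_sub_mul_exp_mul_pow_le_stirling2_mul_factorial (n k : ℕ) :
    (1 - k * Real.exp (-(n / k))) * (k : ℝ) ^ n ≤ stirling2 n k * k ! := by
  cases k with
  | zero => cases n <;> simp [stirling2]
  | succ k =>
    have union_bound : ((k + 1 : ℕ) : ℝ) ^ n ≤
        stirling2 n (k + 1) * (k + 1)! + (k + 1 : ℕ) * (k : ℝ) ^ n := by
      exact_mod_cast succ_pow_le_stirling2_mul_factorial_add n k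
    have pow_bound : (k : ℝ) ^ n ≤
        ((k + 1 : ℕ) : ℝ) ^ n * Real.exp (-(n / (k + 1 : ℕ))) := by
      simpa [← div_eq_mul_inv] using
        pow_le_pow_mul_exp_neg (x := (k + 1 : ℕ)) (y := k) (by positivity) k.cast_nonneg n
    calc (1 - (k + 1 : ℕ) * Real.exp (-(n / (k + 1 : ℕ)))) * ((k + 1 : ℕ) : ℝ) ^ n
        = ((k + 1 : ℕ) : ℝ) ^ n -
            (k + 1 : ℕ) * (((k + 1 : ℕ) : ℝ) ^ n * Real.exp (-(n / (k + 1 : ℕ)))) := by ring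
      _ ≤ ((k + 1 : ℕ) : ℝ) ^ n - (k + 1 : ℕ) * (k : ℝ) ^ n := by gcongr
      _ ≤ stirling2 n (k + 1) * (k + 1)! := by linarith

theorem stmt2_general (n k : ℕ) :
    (1 - k * Real.exp (-(n / k))) * (k : ℝ) ^ n / k ! ≤ stirling2 n k ∧
      (stirling2 n k : ℝ) ≤ (k : ℝ) ^ n / k ! := by
  have factorial_pos : (0 : ℝ) < k ! := mod_cast k.factorial_pos
  rw [div_le_iff₀ factorial_pos, le_div_iff₀ factorial_pos]
  exact ⟨one_sub_mul_exp_mul_pow_le_stirling2_mul_factorial n k,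
    mod_cast stirling2_mul_factorial_le_pow n k⟩

/-- For positive integers `n`, `k` with `n ≥ k·ln(2k)`:
`(1/2)·k^n/k! ≤ S(n,k) ≤ k^n/k!`. -/
theorem stmt2 (n k : ℕ) (hn : 0 < n) (hk : 0 < k)
    (h : (n : ℝ) ≥ (k : ℝ) * Real.log (2 * (k : ℝ))) :
    (1 / 2 : ℝ) * (k : ℝ) ^ n / (Nat.factorial k : ℝ) ≤ (stirling2 n k : ℝ) ∧
      (stirling2 n k : ℝ) ≤ (k : ℝ) ^ n / (Nat.factorial k : ℝ) := by
  have half_bound := mul_exp_neg_div_le_inv two_pos (Nat.cast_pos.mpr hk) h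
  exact (stmt2_general n k).imp_left (le_trans (by gcongr; linarith))
end

section
/- Let d ≥ 2 be an integer and set N = d(d+1)/2, the number of pairs (ℓ,s) of integers with 0 ≤ ℓ < s ≤ d. There exist integers d < k_1 < k_2 < ⋯ < k_N such that the N×N real matrix F, with rows indexed by i ∈ {1,…,N}, columns indexed by the pairs (ℓ,s) with 0 ≤ ℓ < s ≤ d, and entries F_{i,(ℓ,s)} = f_{ℓ,s}(k_i), has full rank (is nonsingular). -/
/-- The function `f_{ℓ,s}(k) = k⁽ℓ⁾ · (s−ℓ)! · S(k−ℓ, s−ℓ)`. -/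
def fls (ℓ s k : ℕ) : ℕ :=
  k.descFactorial ℓ * (s - ℓ).factorial * stirling2 (k - ℓ) (s - ℓ)

/-! Since `S(n, m)` grows like `m ^ n` for fixed `m`, the function `f_{ℓ,s}(k)` has order of growth
`k ^ ℓ * (s - ℓ) ^ k`. Hence the lexicographic order on the pairs `(s - ℓ, ℓ)` makes the `f_{ℓ,s}`
an asymptotic scale: of any two distinct ones, one is negligible against the other. In a linear
relation the dominant term would be negligible against itself, so the `f_{ℓ,s}` are linearly
independent even as functions on `{k | d < k}`. Equivalently, the vectors `(f_{ℓ,s}(k))_{ℓ,s}`,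
`k > d`, span the whole `N`-dimensional space, and sorting the indices of a basis extracted from
them gives `k₁ < ⋯ < k_N`. -/

open Asymptotics Filter

section DominatedFamilies

variable {ι α E 𝕜 : Type*} [NormedAddCommGroup E] {l : Filter α} {f : ι → α → E}

theorem exists_forall_ne_isLittleO (hne : ∀ i, ∃ᶠ x in l, f i x ≠ 0)
    (hf : Pairwise fun i j => f i =o[l] f j ∨ f j =o[l] f i) {s : Finset ι} (hs : s.Nonempty) :
    ∃ i ∈ s, ∀ j ∈ s, j ≠ i → f j =o[l] f i := by
  have : IsStrictOrder ι fun i j => f j =o[l] f i :=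
    { irrefl := fun i => isLittleO_irrefl (hne i)
      trans := fun _ _ _ hij hjk => hjk.trans hij }
  obtain ⟨⟨i, hi⟩, -, hmin⟩ :=
    (s.wellFoundedOn (r := fun i j => f j =o[l] f i)).has_min Set.univ
      ⟨⟨_, hs.choose_spec⟩, Set.mem_univ _⟩
  exact ⟨i, hi, fun j hj hji => (hf hji).resolve_right (hmin ⟨j, hj⟩ (Set.mem_univ _))⟩

theorem linearIndependent_of_pairwise_isLittleO [NormedField 𝕜] [NormedSpace 𝕜 E]
    (hne : ∀ i, ∃ᶠ x in l, f i x ≠ 0)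
    (hf : Pairwise fun i j => f i =o[l] f j ∨ f j =o[l] f i) : LinearIndependent 𝕜 f := by
  classical
  by_contra hdep
  obtain ⟨s, c, hsum, i₀, hi₀, hci₀⟩ := not_linearIndependent_iff.mp hdep
  obtain ⟨i, hi, hdom⟩ := exists_forall_ne_isLittleO hne hf
    (s := s.filter (c · ≠ 0)) ⟨i₀, Finset.mem_filter.mpr ⟨hi₀, hci₀⟩⟩
  obtain ⟨his, hci⟩ := Finset.mem_filter.mp hi
  have hrest : (fun x => ∑ j ∈ s.erase i, c j • f j x) =o[l] f i := by
    refine IsLittleO.fun_sum fun j hj => ?_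
    obtain ⟨hji, hjs⟩ := Finset.mem_erase.mp hj
    by_cases hcj : c j = 0
    · simp [hcj]
    · exact (hdom j (Finset.mem_filter.mpr ⟨hjs, hcj⟩) hji).const_smul_left (c j)
  have hlead : (fun x => -c i • f i x) = fun x => ∑ j ∈ s.erase i, c j • f j x := by
    funext x
    have hx := congrFun hsum x
    rw [← Finset.add_sum_erase s _ his] at hx
    simpa [neg_smul, Finset.sum_apply] using neg_eq_of_add_eq_zero_right hx
  rw [← hlead, isLittleO_const_smul_left (neg_ne_zero.mpr hci)] at hrest
  exact isLittleO_irrefl (hne i) hrest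

end DominatedFamilies

theorem exists_strictMono_rank_eq_of_linearIndependent {α ι K : Type*} [LinearOrder α] [Fintype ι]
    [Field K] {f : ι → α → K} (hf : LinearIndependent K f) {n : ℕ} (hn : Fintype.card ι = n) :
    ∃ k : Fin n → α, StrictMono k ∧ (Matrix.of fun i j => f j (k i)).rank = n := by
  obtain ⟨κ, a, ha, hspan, hli⟩ := exists_linearIndependent' K (flip f)
  rw [span_flip_eq_top_iff_linearIndependent.mpr hf] at hspan
  have := hli.finite
  have := Fintype.ofFinite κ
  have hκ : Fintype.card κ = n := by
    rw [← finrank_span_eq_card hli, hspan, finrank_top, Module.finrank_fintype_fun_eq_card, hn]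
  let _ : LinearOrder κ := LinearOrder.lift' a ha
  let e : Fin n ≃o κ := Fintype.orderIsoFinOfCardEq κ hκ
  refine ⟨a ∘ e, fun i j hij => e.strictMono hij, ?_⟩
  have hrows : LinearIndependent K (Matrix.of fun i j => f j ((a ∘ e) i)).row :=
    hli.comp e e.injective
  rw [hrows.rank_matrix, Fintype.card_fin]

theorem card_subtype_fst_lt_snd (ι : Type*) [Fintype ι] [LinearOrder ι] :
    Fintype.card {p : ι × ι // p.1 < p.2} = (Fintype.card ι).choose 2 := by
  rw [← Sym2.card_subtype_not_diag]
  exact Fintype.card_congr <| (Equiv.subtypeEquivRight fun _ => lt_iff_le_and_ne).trans <|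
    (Equiv.subtypeSubtypeEquivSubtypeInter (fun p : ι × ι => p.1 ≤ p.2) _).symm.trans <|
    Sym2.sortEquiv.symm.subtypeEquiv fun _ => Sym2.mk_isDiag_iff.not.symm

theorem stirling2_eq_stirlingSecond : stirling2 = Nat.stirlingSecond := by
  funext n m
  induction n generalizing m with
  | zero => cases m <;> rfl
  | succ n ih => cases m <;> simp [stirling2, Nat.stirlingSecond, ih]

theorem mul_descFactorial_eq_descFactorial_succ_add (x j : ℕ) :
    x * x.descFactorial j = x.descFactorial (j + 1) + j * x.descFactorial j := by
  rcases le_or_gt j x with hjx | hxj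
  · rw [Nat.descFactorial_succ, ← add_mul, Nat.sub_add_cancel hjx]
  · simp [Nat.descFactorial_of_lt hxj]

theorem sum_stirlingSecond_mul_descFactorial (n x : ℕ) :
    ∑ j ∈ Finset.range (n + 1), Nat.stirlingSecond n j * x.descFactorial j = x ^ n := by
  induction n with
  | zero => simp
  | succ n ih =>
    have hshift : ∑ j ∈ Finset.range (n + 1),
          (j + 1) * Nat.stirlingSecond n (j + 1) * x.descFactorial (j + 1) =
        ∑ j ∈ Finset.range (n + 1), j * Nat.stirlingSecond n j * x.descFactorial j := by
      have htop := Nat.stirlingSecond_eq_zero_of_lt n.lt_succ_self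
      simpa [htop] using (Finset.sum_range_succ' (fun j =>
        j * Nat.stirlingSecond n j * x.descFactorial j) (n + 1)).symm.trans
          (Finset.sum_range_succ _ (n + 1))
    calc ∑ j ∈ Finset.range (n + 2), Nat.stirlingSecond (n + 1) j * x.descFactorial j
        = ∑ j ∈ Finset.range (n + 1), (j * Nat.stirlingSecond n j * x.descFactorial j +
            Nat.stirlingSecond n j * x.descFactorial (j + 1)) := by
          rw [Finset.sum_range_succ']
          simp only [Nat.stirlingSecond_succ_succ, Nat.stirlingSecond_succ_zero, zero_mul,
            add_zero, add_mul, Finset.sum_add_distrib, ← hshift]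
      _ = ∑ j ∈ Finset.range (n + 1), x * (Nat.stirlingSecond n j * x.descFactorial j) := by
          refine Finset.sum_congr rfl fun j _ => ?_
          rw [mul_left_comm x, mul_descFactorial_eq_descFactorial_succ_add]
          ring
      _ = x ^ (n + 1) := by rw [← Finset.mul_sum, ih, pow_succ']

theorem stirlingSecond_le_pow (n m : ℕ) : Nat.stirlingSecond n m ≤ m ^ n := by
  rcases lt_or_ge n m with hnm | hmn
  · simp [Nat.stirlingSecond_eq_zero_of_lt hnm]
  · calc Nat.stirlingSecond n m
        ≤ Nat.stirlingSecond n m * m.descFactorial m :=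
          Nat.le_mul_of_pos_right _ (Nat.descFactorial_self m ▸ m.factorial_pos)
      _ ≤ ∑ j ∈ Finset.range (n + 1), Nat.stirlingSecond n j * m.descFactorial j :=
          Finset.single_le_sum (f := fun j => Nat.stirlingSecond n j * m.descFactorial j)
            (fun _ _ => Nat.zero_le _) (Finset.mem_range_succ_iff.mpr hmn)
      _ = m ^ n := sum_stirlingSecond_mul_descFactorial n m

theorem pow_le_stirlingSecond_add_left (m j : ℕ) : m ^ j ≤ Nat.stirlingSecond (m + j) m := by
  induction j with
  | zero => simp [Nat.stirlingSecond_self]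
  | succ j ih =>
    cases m with
    | zero => simp
    | succ m =>
      calc (m + 1) ^ (j + 1) = (m + 1) * (m + 1) ^ j := pow_succ' _ _
        _ ≤ (m + 1) * Nat.stirlingSecond (m + 1 + j) (m + 1) := by gcongr
        _ ≤ Nat.stirlingSecond (m + 1 + (j + 1)) (m + 1) := by
          rw [← add_assoc, Nat.stirlingSecond_succ_succ]
          exact Nat.le_add_right _ _

theorem stirlingSecond_isTheta (m : ℕ) :
    (fun n => (Nat.stirlingSecond n m : ℝ)) =Θ[atTop] fun n => (m : ℝ) ^ n := by
  refine ⟨.of_norm_le fun n => ?_, .of_bound ((m : ℝ) ^ m) ?_⟩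
  · simpa using mod_cast stirlingSecond_le_pow n m
  · filter_upwards [eventually_ge_atTop m] with n hn
    obtain ⟨j, rfl⟩ := Nat.exists_eq_add_of_le hn
    have hlower : (m : ℝ) ^ j ≤ Nat.stirlingSecond (m + j) m :=
      mod_cast pow_le_stirlingSecond_add_left m j
    rw [pow_add, Real.norm_of_nonneg (by positivity), Real.norm_of_nonneg (by positivity)]
    gcongr

theorem stirlingSecond_sub_isTheta (a : ℕ) {m : ℕ} (hm : m ≠ 0) :
    (fun n => (Nat.stirlingSecond (n - a) m : ℝ)) =Θ[atTop] fun n => (m : ℝ) ^ n := by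
  have hshift : (fun n => (m : ℝ) ^ (n - a)) =ᶠ[atTop] fun n => ((m : ℝ) ^ a)⁻¹ * (m : ℝ) ^ n := by
    filter_upwards [eventually_ge_atTop a] with n hn
    rw [pow_sub₀ _ (Nat.cast_ne_zero.mpr hm) hn, mul_comm]
  refine IsTheta.trans ?_ (hshift.trans_isTheta ?_)
  · exact ⟨(stirlingSecond_isTheta m).1.comp_tendsto (tendsto_sub_atTop_nat a),
      (stirlingSecond_isTheta m).2.comp_tendsto (tendsto_sub_atTop_nat a)⟩
  · exact (isTheta_const_mul_left (by positivity)).mpr isTheta_rfl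

theorem isLittleO_natCast_pow_mul_pow_of_abs_lt (a b : ℕ) {r₁ r₂ : ℝ} (h : |r₁| < |r₂|) :
    (fun k : ℕ => (k : ℝ) ^ a * r₁ ^ k) =o[atTop] fun k : ℕ => (k : ℝ) ^ b * r₂ ^ k := by
  have hgeom : (fun k : ℕ => (k : ℝ) ^ a * r₁ ^ k) =o[atTop] fun k : ℕ => r₂ ^ k := by
    rw [← isLittleO_norm_right]
    simpa only [norm_pow, Real.norm_eq_abs] using
      isLittleO_pow_const_mul_const_pow_const_pow_of_norm_lt a h
  refine hgeom.trans_isBigO (.of_bound' ?_)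
  filter_upwards [eventually_ge_atTop 1] with k hk
  rw [norm_mul]
  refine le_mul_of_one_le_left (norm_nonneg _) ?_
  simpa using one_le_pow₀ (n := b) (Nat.one_le_cast.mpr hk : (1 : ℝ) ≤ k)

theorem fls_isTheta {l s : ℕ} (h : l < s) :
    (fun k => (fls l s k : ℝ)) =Θ[atTop] fun k : ℕ => (k : ℝ) ^ l * ((s - l : ℕ) : ℝ) ^ k := by
  simp only [fls, stirling2_eq_stirlingSecond, Nat.cast_mul]
  have hfactorial : ((s - l).factorial : ℝ) ≠ 0 := mod_cast (s - l).factorial_ne_zero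
  have hdesc := (isEquivalent_descFactorial l).isTheta
  simpa only [mul_assoc] using hdesc.mul
    ((isTheta_const_mul_left hfactorial).mpr (stirlingSecond_sub_isTheta l (by omega)))

theorem fls_isLittleO_fls {l s l' s' : ℕ} (h : l < s) (h' : l' < s')
    (hlt : s - l < s' - l' ∨ s - l = s' - l' ∧ l < l') :
    (fun k => (fls l s k : ℝ)) =o[atTop] fun k => (fls l' s' k : ℝ) := by
  rw [(fls_isTheta h).isLittleO_congr_left, (fls_isTheta h').isLittleO_congr_right]
  rcases hlt with hbase | ⟨hbase, hdegree⟩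
  · exact isLittleO_natCast_pow_mul_pow_of_abs_lt l l' (by simpa using mod_cast hbase)
  · rw [hbase]
    exact ((isLittleO_pow_pow_atTop_of_lt hdegree).comp_tendsto
      tendsto_natCast_atTop_atTop).mul_isBigO (isBigO_refl _ _)

theorem eventually_fls_ne_zero {l s : ℕ} (h : l < s) : ∀ᶠ k in atTop, (fls l s k : ℝ) ≠ 0 := by
  filter_upwards [(fls_isTheta h).eq_zero_iff, eventually_gt_atTop 0] with k hk hpos
  have hbase : 0 < s - l := Nat.sub_pos_of_lt h
  rw [Ne, hk]
  positivity

theorem linearIndependent_fls (n : ℕ) :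
    LinearIndependent ℝ fun (p : {p : ℕ × ℕ // p.1 < p.2}) (k : Set.Ioi n) =>
      (fls p.1.1 p.1.2 k : ℝ) := by
  have htendsto : Tendsto ((↑) : Set.Ioi n → ℕ) atTop atTop := tendsto_Ioi_atTop.mp tendsto_id
  refine linearIndependent_of_pairwise_isLittleO (l := atTop)
    (fun p => (htendsto.eventually (eventually_fls_ne_zero p.2)).frequently) ?_
  rintro ⟨⟨l, s⟩, h⟩ ⟨⟨l', s'⟩, h'⟩ hne
  have hcmp : (s - l < s' - l' ∨ s - l = s' - l' ∧ l < l') ∨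
      (s' - l' < s - l ∨ s' - l' = s - l ∧ l' < l) := by
    simp only [ne_eq, Subtype.mk.injEq, Prod.mk.injEq] at hne h h'
    omega
  exact hcmp.imp (fun hlt => (fls_isLittleO_fls h h' hlt).comp_tendsto htendsto)
    (fun hlt => (fls_isLittleO_fls h' h hlt).comp_tendsto htendsto)

/-- For `d ≥ 2` and `N = d(d+1)/2`, there are integers `d < k₁ < ⋯ < k_N` such that the
`N×N` matrix with entries `f_{ℓ,s}(k_i)`, columns indexed by pairs `0 ≤ ℓ < s ≤ d`,
has full rank. -/
theorem stmt8 (d : ℕ) (hd : 2 ≤ d) :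
    ∃ k : Fin (d * (d + 1) / 2) → ℕ, StrictMono k ∧ (∀ i, d < k i) ∧
      (Matrix.of fun (i : Fin (d * (d + 1) / 2))
          (p : {p : Fin (d + 1) × Fin (d + 1) // p.1 < p.2}) =>
        ((fls (p.1.1 : ℕ) (p.1.2 : ℕ) (k i) : ℕ) : ℝ)).rank = d * (d + 1) / 2 := by
  have hcard : Fintype.card {p : Fin (d + 1) × Fin (d + 1) // p.1 < p.2} = d * (d + 1) / 2 := by
    rw [card_subtype_fst_lt_snd, Fintype.card_fin, Nat.choose_two_right, Nat.add_sub_cancel,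
      mul_comm]
  let toNatPair (p : {p : Fin (d + 1) × Fin (d + 1) // p.1 < p.2}) :
      {p : ℕ × ℕ // p.1 < p.2} := ⟨(p.1.1, p.1.2), p.2⟩
  have hinj : Function.Injective toNatPair := by
    rintro ⟨⟨l, s⟩, h⟩ ⟨⟨l', s'⟩, h'⟩ heq
    simpa [toNatPair, Fin.ext_iff] using heq
  obtain ⟨k, hmono, hrank⟩ :=
    exists_strictMono_rank_eq_of_linearIndependent ((linearIndependent_fls d).comp toNatPair hinj)
      hcard
  exact ⟨fun i => k i, hmono, fun i => (k i).2, hrank⟩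
end
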